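/- For every positive integer n, the rational number (∑_{k=0}^{n-1} C(2k,k)) / (n² C(2n,n)) is a 3-adic integer congruent to -1 mod 3, i.e. its 3-adic valuation is 0 and its reduction mod 3 is 2. -/

import Mathlib

/-!
Write `F(n) = ₂F₁(1, 1 - n; 3/2; 3/4)`, a terminating series. Induction on `n` gives, for every `x`,
`∑_{j<n} C(2j,j) x^(n-1-j) = C(2n,n) ∑_k (x-4)^k C(n,k+1) / C(2k+2,k+1)`, and at `x = 1` this says
that the quotient in question is `F(n) / (2n)`. So the claim is `F(n) ≡ n` modulo `3n` in `ℤ₃`.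

In `F(n) = ∑_k 3^k k! / (2k+1)! ∏_{0<i≤k} (i - n)` the coefficients in front of the products are
3-adically integral, and divisible by `3` for `k ≥ 2`, so modulo `3n` the series (cut off at a
common place) changes by `-n/2 ≡ n` between `0` and `n`. At `n = 0` it becomes
`∑_k 3^k k!² / (2k+1)!`, up to an algebraic factor the series of `arcsin (√3/2)`; 3-adically its sum
vanishes, being essentially the logarithm of a root of unity. A finite form of this is enough:
replacing `k!²` by `∏_{0<i≤k} (i² - N²)` costs only `O(N²)` and turns the truncation at `N` into
`1/N` times the Morgan-Voyce polynomial `B_{N-1}` at `-3`, which vanishes for `3 ∣ N` because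
`N ↦ B_{N-1}(-3)` has period `3`.
-/

open Finset
open scoped Nat

section CentralBinom

theorem centralBinom_succ_mul_factorial_mul_factorial (k : ℕ) :
    (k + 1).centralBinom * ((k + 1)! * k !) = 2 * (2 * k + 1)! := by
  have hcentral : (k + 1).centralBinom * (k + 1)! * (k + 1)! = (2 * (k + 1))! := by
    simpa [Nat.centralBinom, two_mul] using
      Nat.add_choose_mul_factorial_mul_factorial (k + 1) (k + 1)
  rw [show 2 * (k + 1) = 2 * k + 1 + 1 by ring, Nat.factorial_succ (2 * k + 1)] at hcentral
  refine Nat.eq_of_mul_eq_mul_left (Nat.add_one_pos k) ?_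
  calc _ = (k + 1).centralBinom * (k + 1)! * (k + 1)! := by rw [Nat.factorial_succ]; ring
    _ = _ := by rw [hcentral]; ring

variable {K : Type*} [Field K] [CharZero K]

theorem cast_centralBinom_ne_zero (n : ℕ) : (n.centralBinom : K) ≠ 0 :=
  mod_cast n.centralBinom_ne_zero

theorem cast_centralBinom_succ (n : ℕ) :
    ((n + 1).centralBinom : K) = 2 * (2 * n + 1) / (n + 1) * n.centralBinom := by
  have recurrence : ((n : K) + 1) * (n + 1).centralBinom = 2 * (2 * n + 1) * n.centralBinom :=
    mod_cast n.succ_mul_centralBinom_succ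
  field_simp [n.cast_add_one_ne_zero (R := K)]
  linear_combination recurrence

theorem centralBinom_succ_mul_choose_div (n k : ℕ) :
    ((n + 1).centralBinom : K) * ((n + 1).choose (k + 1) / (k + 1).centralBinom) =
      n.centralBinom *
        (n.choose k / k.centralBinom + 4 * (n.choose (k + 1) / (k + 1).centralBinom)) := by
  have hn : (n : K) + 1 ≠ 0 := n.cast_add_one_ne_zero
  have hk : (k : K) + 1 ≠ 0 := k.cast_add_one_ne_zero
  have hodd : 2 * (k : K) + 1 ≠ 0 := mod_cast (2 * k).succ_ne_zero
  have hBk : (k.centralBinom : K) ≠ 0 := cast_centralBinom_ne_zero k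
  have absorption : ((n + 1).choose (k + 1) : K) = (n + 1) * n.choose k / (k + 1) := by
    rw [eq_div_iff hk]
    exact_mod_cast (n.add_one_mul_choose_eq k).symm
  have pascal : (n.choose (k + 1) : K) = (n + 1).choose (k + 1) - n.choose k := by
    rw [n.choose_succ_succ k]
    push_cast
    ring
  rw [pascal, absorption, cast_centralBinom_succ n, cast_centralBinom_succ k]
  field_simp
  ring

theorem sum_centralBinom_mul_pow (x : K) {n M : ℕ} (hnM : n ≤ M) :
    ∑ j ∈ range n, (j.centralBinom : K) * x ^ (n - 1 - j) =
      n.centralBinom *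
        ∑ k ∈ range M, (x - 4) ^ k * (n.choose (k + 1) / (k + 1).centralBinom) := by
  induction n with
  | zero => simp
  | succ n ih =>
    obtain ⟨M, rfl⟩ : ∃ L, M = L + 1 := ⟨M - 1, by omega⟩
    have extend : ∑ j ∈ range (n + 1), (j.centralBinom : K) * x ^ (n + 1 - 1 - j) =
        x * ∑ j ∈ range n, (j.centralBinom : K) * x ^ (n - 1 - j) + n.centralBinom := by
      rw [sum_range_succ, mul_sum]
      congr 1
      · refine sum_congr rfl fun j hj => ?_
        have hjn : n + 1 - 1 - j = n - 1 - j + 1 := by have := mem_range.mp hj; omega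
        rw [hjn, pow_succ]
        ring
      · simp
    have shift : ∑ k ∈ range (M + 1), (x - 4) ^ k * (n.choose k / k.centralBinom : K) =
        (x - 4) * ∑ k ∈ range (M + 1),
          (x - 4) ^ k * (n.choose (k + 1) / (k + 1).centralBinom : K) + 1 := by
      rw [sum_range_succ', sum_range_succ _ M, n.choose_eq_zero_of_lt (by omega : n < M + 1),
        mul_add, mul_sum]
      simp [pow_succ, mul_assoc, mul_left_comm]
    calc _ = (n.centralBinom : K) *
          (∑ k ∈ range (M + 1), (x - 4) ^ k * (n.choose k / k.centralBinom : K) +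
            4 * ∑ k ∈ range (M + 1),
              (x - 4) ^ k * (n.choose (k + 1) / (k + 1).centralBinom : K)) := by
          rw [extend, ih (by omega), shift]
          ring
      _ = _ := by
          simp only [mul_sum, ← sum_add_distrib]
          refine sum_congr rfl fun k _ => ?_
          linear_combination (-(x - 4) ^ k) * centralBinom_succ_mul_choose_div (K := K) n k

end CentralBinom

section MorganVoyce

variable {R : Type*} [CommRing R]

/-- The value at `x` of the Morgan-Voyce polynomial `b_N`; "even" refers to the lower binomial
indices. -/
def morganVoyceEven (x : R) (N : ℕ) : R := ∑ k ∈ range (N + 1), x ^ k * (N + k).choose (2 * k)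

/-- The value at `x` of the Morgan-Voyce polynomial `B_{N-1}` (so `0` for `N = 0`); "odd" refers to
the lower binomial indices. -/
def morganVoyceOdd (x : R) (N : ℕ) : R := ∑ k ∈ range N, x ^ k * (N + k).choose (2 * k + 1)

theorem morganVoyceOdd_succ (x : R) (N : ℕ) :
    morganVoyceOdd x (N + 1) = morganVoyceOdd x N + morganVoyceEven x N := by
  have extend : morganVoyceOdd x N =
      ∑ k ∈ range (N + 1), x ^ k * ((N + k).choose (2 * k + 1) : R) := by
    rw [sum_range_succ, Nat.choose_eq_zero_of_lt (by omega : N + N < 2 * N + 1)]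
    simp [morganVoyceOdd]
  rw [extend, morganVoyceOdd, morganVoyceEven, ← sum_add_distrib]
  refine sum_congr rfl fun k _ => ?_
  rw [show N + 1 + k = N + k + 1 by ring, Nat.choose_succ_succ]
  push_cast
  ring

theorem morganVoyceEven_succ (x : R) (N : ℕ) :
    morganVoyceEven x (N + 1) = morganVoyceEven x N + x * morganVoyceOdd x (N + 1) := by
  have extend : morganVoyceEven x N =
      ∑ k ∈ range (N + 2), x ^ k * ((N + k).choose (2 * k) : R) := by
    rw [sum_range_succ, Nat.choose_eq_zero_of_lt (by omega : N + (N + 1) < 2 * (N + 1))]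
    simp [morganVoyceEven]
  rw [extend, morganVoyceEven, morganVoyceOdd, sum_range_succ', sum_range_succ' (n := N + 1),
    mul_sum, add_right_comm (∑ _ ∈ _, _), ← sum_add_distrib]
  congr 1
  · refine sum_congr rfl fun k _ => ?_
    rw [show N + 1 + (k + 1) = N + (k + 1) + 1 by ring, show 2 * (k + 1) = 2 * k + 1 + 1 by ring,
      Nat.choose_succ_succ, show N + (k + 1) = N + 1 + k by ring]
    push_cast
    ring
  · simp

theorem morganVoyce_neg_three_three_mul (t : ℕ) :
    morganVoyceOdd (-3 : R) (3 * t) = 0 ∧ morganVoyceEven (-3 : R) (3 * t) = 1 := by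
  induction t with
  | zero => simp [morganVoyceOdd, morganVoyceEven]
  | succ t ih =>
    obtain ⟨hOdd, hEven⟩ := ih
    simp only [show 3 * (t + 1) = 3 * t + 1 + 1 + 1 by ring, morganVoyceOdd_succ,
      morganVoyceEven_succ, hOdd, hEven]
    constructor <;> ring

end MorganVoyce

section DescFactorial

variable {R : Type*} [CommRing R]

theorem cast_descFactorial_succ (n k : ℕ) :
    (n.descFactorial (k + 1) : R) = n.descFactorial k * (n - k) := by
  simp only [← descPochhammer_eval_eq_descFactorial, descPochhammer_succ_eval]

theorem cast_descFactorial_succ_eq_prod (n k : ℕ) :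
    (n.descFactorial (k + 1) : R) = (-1) ^ k * n * ∏ i ∈ range k, ((i : R) + 1 - n) := by
  induction k with
  | zero => simp
  | succ k ih =>
    rw [cast_descFactorial_succ, ih, prod_range_succ]
    push_cast
    ring

theorem cast_add_descFactorial_eq_prod (n k : ℕ) :
    ((n + k).descFactorial (2 * k + 1) : R) =
      (-1) ^ k * n * ∏ i ∈ range k, (((i : R) + 1) ^ 2 - n ^ 2) := by
  induction k with
  | zero => simp
  | succ k ih =>
    rw [show n + (k + 1) = n + k + 1 by ring, show 2 * (k + 1) + 1 = 2 * k + 1 + 1 + 1 by ring,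
      Nat.succ_descFactorial_succ, Nat.cast_mul, cast_descFactorial_succ, ih, prod_range_succ]
    push_cast
    ring

end DescFactorial

section Padic

variable {p : ℕ} [Fact p.Prime]

theorem padic_norm_intCast_le_of_dvd {a b : ℤ} (hab : a ∣ b) : ‖(b : ℚ_[p])‖ ≤ ‖(a : ℚ_[p])‖ := by
  obtain ⟨c, rfl⟩ := hab
  rw [Int.cast_mul, norm_mul]
  exact mul_le_of_le_one_right (norm_nonneg _) (Padic.norm_int_le_one c)

theorem padic_norm_prod_sub_sub_prod_le {ι : Type*} (s : Finset ι) (f : ι → ℤ) (a : ℤ) :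
    ‖∏ i ∈ s, ((f i : ℚ_[p]) - a) - ∏ i ∈ s, (f i : ℚ_[p])‖ ≤ ‖(a : ℚ_[p])‖ := by
  have congruence : ∏ i ∈ s, f i ≡ ∏ i ∈ s, (f i - a) [ZMOD a] :=
    Int.ModEq.prod fun i _ => Int.modEq_iff_dvd.mpr ⟨-1, by ring⟩
  exact_mod_cast padic_norm_intCast_le_of_dvd (p := p) congruence.dvd

theorem padic_norm_prime_pow_div_factorial_le_one {k m : ℕ} (hm : m ≤ (p - 1) * k + 1) :
    ‖(p : ℚ_[p]) ^ k / (m ! : ℚ_[p])‖ ≤ 1 := by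
  have hm0 : (m ! : ℚ_[p]) ≠ 0 := mod_cast m.factorial_ne_zero
  have hp : (p : ℚ_[p]) ^ k ≠ 0 := pow_ne_zero k (mod_cast (Fact.out : p.Prime).ne_zero)
  have hval : padicValNat p m ! ≤ k := by
    rcases eq_or_ne m 0 with rfl | hm'
    · simp
    · have hlt := sub_one_mul_padicValNat_factorial_lt_of_ne_zero p hm'
      exact Nat.le_of_mul_le_mul_left (by omega) (Nat.sub_pos_of_lt (Fact.out : p.Prime).one_lt)
  rw [Padic.norm_le_one_iff_val_nonneg, div_eq_mul_inv, Padic.valuation_mul hp (inv_ne_zero hm0),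
    Padic.valuation_inv, Padic.valuation_pow, Padic.valuation_p, Padic.valuation_natCast]
  omega

theorem padic_norm_three : ‖(3 : ℚ_[3])‖ = 3⁻¹ := by
  simpa using Padic.norm_p (p := 3)

theorem padic_norm_two : ‖(2 : ℚ_[3])‖ = 1 := by
  simpa using (Padic.norm_natCast_eq_one_iff (p := 3) (n := 2)).mpr (by decide)

theorem padic_norm_three_pow_mul_factorial_div_factorial_le {k : ℕ} (hk : 2 ≤ k) :
    ‖(3 : ℚ_[3]) ^ k * k ! / (2 * k + 1)!‖ ≤ 3⁻¹ := by
  rcases hk.eq_or_lt with rfl | hk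
  · have h20 : ‖(20 : ℚ_[3])‖ = 1 := by
      simpa using (Padic.norm_natCast_eq_one_iff (p := 3) (n := 20)).mpr (by decide)
    have hterm : (3 : ℚ_[3]) ^ 2 * 2 ! / (2 * 2 + 1)! = 3 / 20 := by
      norm_num [Nat.factorial]
    rw [hterm, norm_div, padic_norm_three, h20, div_one]
  · have hfact : ‖(k ! : ℚ_[3])‖ ≤ 3⁻¹ := by
      rw [← padic_norm_three]
      exact_mod_cast padic_norm_intCast_le_of_dvd (p := 3)
        (mod_cast Nat.dvd_factorial three_pos hk : (3 : ℤ) ∣ (k ! : ℤ))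
    rw [mul_div_right_comm, norm_mul]
    calc _ ≤ (1 : ℝ) * 3⁻¹ := by
          gcongr
          exact padic_norm_prime_pow_div_factorial_le_one le_rfl
      _ = 3⁻¹ := one_mul _

end Padic

section Hypergeometric

variable {K : Type*} [Field K]

variable (K) in
/-- The sum of the first `M` terms of the hypergeometric series `₂F₁(1, 1 - n; 3/2; 3/4)`. It is the
whole series when `0 < n ≤ M`, whereas the series for `n = 0` does not terminate. -/
def hypergeometricSum (M n : ℕ) : K :=
  ∑ k ∈ range M, 3 ^ k * k ! / (2 * k + 1)! * ∏ i ∈ range k, ((i : K) + 1 - n)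

variable [CharZero K]

theorem choose_succ_div_centralBinom_succ (n k : ℕ) :
    (n.choose (k + 1) / (k + 1).centralBinom : K) =
      (-1) ^ k * (n / 2) * (k ! / (2 * k + 1)! * ∏ i ∈ range k, ((i : K) + 1 - n)) := by
  have hchoose : ((k + 1)! * n.choose (k + 1) : K) =
      (-1) ^ k * n * ∏ i ∈ range k, ((i : K) + 1 - n) := by
    rw [← cast_descFactorial_succ_eq_prod, Nat.descFactorial_eq_factorial_mul_choose, Nat.cast_mul]
  have hcentral : ((k + 1).centralBinom * ((k + 1)! * k !) : K) = 2 * (2 * k + 1)! :=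
    mod_cast centralBinom_succ_mul_factorial_mul_factorial k
  have hfact : ((k + 1)! : K) ≠ 0 := mod_cast (k + 1).factorial_ne_zero
  have hoddfact : ((2 * k + 1)! : K) ≠ 0 := mod_cast (2 * k + 1).factorial_ne_zero
  have hB : ((k + 1).centralBinom : K) ≠ 0 := cast_centralBinom_ne_zero (k + 1)
  field_simp
  refine mul_left_cancel₀ hfact ?_
  linear_combination 2 * ((2 * k + 1)! : K) * hchoose -
    (-1) ^ k * n * (∏ i ∈ range k, ((i : K) + 1 - n)) * hcentral

theorem sum_centralBinom_eq_hypergeometricSum {n M : ℕ} (hnM : n ≤ M) :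
    ∑ j ∈ range n, (j.centralBinom : K) =
      n.centralBinom * (n / 2 * hypergeometricSum K M n) := by
  have expansion := sum_centralBinom_mul_pow (1 : K) hnM
  simp only [one_pow, mul_one] at expansion
  have hsign : ∀ k : ℕ, (-3 : K) ^ k * (-1) ^ k = 3 ^ k := fun k => by
    rw [← mul_pow]
    norm_num
  simp only [expansion, hypergeometricSum, mul_sum]
  refine sum_congr rfl fun k _ => ?_
  rw [choose_succ_div_centralBinom_succ, show (1 - 4 : K) = -3 by norm_num, ← hsign]
  ring

theorem morganVoyceOdd_neg_three_eq_mul_sum (N : ℕ) :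
    morganVoyceOdd (-3 : K) N =
      N * ∑ k ∈ range N,
        (3 : K) ^ k / (2 * k + 1)! * ∏ i ∈ range k, (((i : K) + 1) ^ 2 - N ^ 2) := by
  rw [morganVoyceOdd, mul_sum]
  refine sum_congr rfl fun k _ => ?_
  have hfact : ((2 * k + 1)! : K) ≠ 0 := mod_cast (2 * k + 1).factorial_ne_zero
  have hchoose : ((2 * k + 1)! * (N + k).choose (2 * k + 1) : K) =
      (-1) ^ k * N * ∏ i ∈ range k, (((i : K) + 1) ^ 2 - N ^ 2) := by
    rw [← cast_add_descFactorial_eq_prod, Nat.descFactorial_eq_factorial_mul_choose, Nat.cast_mul]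
  have hsign : (-3 : K) ^ k * (-1) ^ k = 3 ^ k := by rw [← mul_pow]; norm_num
  field_simp
  linear_combination (-3 : K) ^ k * hchoose +
    (N * ∏ i ∈ range k, (((i : K) + 1) ^ 2 - N ^ 2)) * hsign

theorem sum_prod_sq_sub_sq_eq_zero {N : ℕ} (hN : 3 ∣ N) :
    ∑ k ∈ range N,
      (3 : K) ^ k / (2 * k + 1)! * ∏ i ∈ range k, (((i : K) + 1) ^ 2 - N ^ 2) = 0 := by
  obtain ⟨t, rfl⟩ := hN
  rcases eq_or_ne (3 * t) 0 with ht | ht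
  · simp [ht]
  · refine (mul_eq_zero.mp ?_).resolve_left (Nat.cast_ne_zero.mpr ht)
    rw [← morganVoyceOdd_neg_three_eq_mul_sum, (morganVoyce_neg_three_three_mul t).1]

end Hypergeometric

section Congruences

theorem norm_hypergeometricSum_zero_le {N : ℕ} (hN : 3 ∣ N) :
    ‖hypergeometricSum ℚ_[3] N 0‖ ≤ ‖(N : ℚ_[3]) ^ 2‖ := by
  have hfact : ∀ k : ℕ, ∏ i ∈ range k, ((i : ℚ_[3]) + 1) = k ! := fun k => by
    exact_mod_cast congrArg (Nat.cast : ℕ → ℚ_[3]) (prod_range_add_one_eq_factorial k)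
  have hdiff : hypergeometricSum ℚ_[3] N 0 = -∑ k ∈ range N, (3 : ℚ_[3]) ^ k / (2 * k + 1)! *
      (∏ i ∈ range k, (((i : ℚ_[3]) + 1) ^ 2 - N ^ 2) -
        ∏ i ∈ range k, ((i : ℚ_[3]) + 1) ^ 2) := by
    simp only [mul_sub, sum_sub_distrib, sum_prod_sq_sub_sq_eq_zero hN, zero_sub, neg_neg,
      hypergeometricSum, Nat.cast_zero, sub_zero, prod_pow, hfact]
    exact sum_congr rfl fun k _ => by ring
  rw [hdiff, norm_neg]
  refine IsUltrametricDist.norm_sum_le_of_forall_le_of_nonneg (norm_nonneg _) fun k _ => ?_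
  have hcoeff : ‖(3 : ℚ_[3]) ^ k / (2 * k + 1)!‖ ≤ 1 :=
    padic_norm_prime_pow_div_factorial_le_one le_rfl
  have hprod := padic_norm_prod_sub_sub_prod_le (p := 3) (range k)
    (fun i => ((i : ℤ) + 1) ^ 2) (N ^ 2)
  push_cast at hprod
  rw [norm_mul]
  exact (mul_le_of_le_one_left (norm_nonneg _) hcoeff).trans hprod

theorem norm_hypergeometricSum_sub_sub_le (n : ℕ) {M : ℕ} (hM : 2 ≤ M) :
    ‖hypergeometricSum ℚ_[3] M n - hypergeometricSum ℚ_[3] M 0 - n‖ ≤ ‖(3 * n : ℚ_[3])‖ := by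
  obtain ⟨L, rfl⟩ := Nat.exists_eq_add_of_le' hM
  have hsplit : hypergeometricSum ℚ_[3] (L + 2) n - hypergeometricSum ℚ_[3] (L + 2) 0 - n =
      ∑ k ∈ range L, 3 ^ (k + 2) * (k + 2)! / (2 * (k + 2) + 1)! *
        (∏ i ∈ range (k + 2), ((i : ℚ_[3]) + 1 - n) - ∏ i ∈ range (k + 2), ((i : ℚ_[3]) + 1)) +
      -(3 * n / 2) := by
    simp only [hypergeometricSum, ← sum_sub_distrib, ← mul_sub, Nat.cast_zero, sub_zero]
    rw [sum_range_succ', sum_range_succ', add_assoc, add_sub_assoc]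
    congr 1
    norm_num [Nat.factorial]
    ring
  rw [hsplit]
  refine (IsUltrametricDist.norm_add_le_max _ _).trans (max_le ?_ ?_)
  · refine IsUltrametricDist.norm_sum_le_of_forall_le_of_nonneg (norm_nonneg _) fun k _ => ?_
    have hprod := padic_norm_prod_sub_sub_prod_le (p := 3) (range (k + 2)) (fun i => (i : ℤ) + 1) n
    push_cast at hprod
    rw [norm_mul, norm_mul, padic_norm_three]
    gcongr
    exact padic_norm_three_pow_mul_factorial_div_factorial_le (Nat.le_add_left 2 k)
  · rw [norm_neg, norm_div, padic_norm_two, div_one]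

theorem norm_hypergeometricSum_sub_le {n : ℕ} (hn : 0 < n) :
    ‖hypergeometricSum ℚ_[3] (3 * n) n - n‖ ≤ ‖(3 * n : ℚ_[3])‖ := by
  have hshift := norm_hypergeometricSum_sub_sub_le n (by omega : 2 ≤ 3 * n)
  have hzero : ‖hypergeometricSum ℚ_[3] (3 * n) 0‖ ≤ ‖(3 * n : ℚ_[3])‖ := by
    refine (norm_hypergeometricSum_zero_le (dvd_mul_right 3 n)).trans ?_
    exact_mod_cast padic_norm_intCast_le_of_dvd (p := 3) (dvd_pow_self (3 * n : ℤ) two_ne_zero)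
  calc ‖hypergeometricSum ℚ_[3] (3 * n) n - n‖
      = ‖(hypergeometricSum ℚ_[3] (3 * n) n - hypergeometricSum ℚ_[3] (3 * n) 0 - n) +
          hypergeometricSum ℚ_[3] (3 * n) 0‖ := by ring_nf
    _ ≤ ‖(3 * n : ℚ_[3])‖ := (IsUltrametricDist.norm_add_le_max _ _).trans (max_le hshift hzero)

theorem norm_hypergeometricSum_div_add_one_le {n : ℕ} (hn : 0 < n) :
    ‖hypergeometricSum ℚ_[3] (3 * n) n / (2 * n) + 1‖ ≤ 3⁻¹ := by
  have hn0 : (n : ℚ_[3]) ≠ 0 := mod_cast hn.ne'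
  have hquotient : hypergeometricSum ℚ_[3] (3 * n) n / (2 * n) + 1 =
      (hypergeometricSum ℚ_[3] (3 * n) n - n + 3 * n) / (2 * n) := by
    field_simp
    ring
  rw [hquotient, norm_div, norm_mul 2, padic_norm_two, one_mul, div_le_iff₀ (norm_pos_iff.mpr hn0),
    ← padic_norm_three, ← norm_mul]
  exact (IsUltrametricDist.norm_add_le_max _ _).trans
    (max_le (norm_hypergeometricSum_sub_le hn) le_rfl)

end Congruences

/-- For every positive integer `n`, the rational number
`(∑_{k=0}^{n-1} C(2k,k)) / (n² C(2n,n))`, viewed in `ℚ₃`, is a 3-adic integer of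
valuation `0` congruent to `-1` mod `3`: its norm is `1` and it lies in `-1 + 3ℤ₃`. -/
theorem stmt_15 (n : ℕ) (hn : 0 < n) :
    ‖(((∑ k ∈ Finset.range n, (Nat.choose (2 * k) k : ℚ)) /
        ((n : ℚ) ^ 2 * (Nat.choose (2 * n) n : ℚ)) : ℚ) : ℚ_[3])‖ = 1 ∧
      ‖(((∑ k ∈ Finset.range n, (Nat.choose (2 * k) k : ℚ)) /
        ((n : ℚ) ^ 2 * (Nat.choose (2 * n) n : ℚ)) : ℚ) : ℚ_[3]) + 1‖ ≤ (3 : ℝ)⁻¹ := by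
  have hn0 : (n : ℚ_[3]) ≠ 0 := mod_cast hn.ne'
  have hB : (n.centralBinom : ℚ_[3]) ≠ 0 := cast_centralBinom_ne_zero n
  have hratio : (((∑ k ∈ range n, (Nat.choose (2 * k) k : ℚ)) /
      ((n : ℚ) ^ 2 * (Nat.choose (2 * n) n : ℚ)) : ℚ) : ℚ_[3]) =
        hypergeometricSum ℚ_[3] (3 * n) n / (2 * n) := by
    simp only [← Nat.centralBinom_eq_two_mul_choose]
    push_cast
    rw [sum_centralBinom_eq_hypergeometricSum (by omega : n ≤ 3 * n)]
    field_simp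
  have hcongr := norm_hypergeometricSum_div_add_one_le hn
  rw [hratio]
  refine ⟨?_, hcongr⟩
  rw [Padic.norm_eq_of_norm_add_lt_right, norm_one]
  exact hcongr.trans_lt (by rw [norm_one]; norm_num)
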